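/- The Ehrhart polynomial of the independence polytope of the uniform matroid U_{k,n}, i.e. the polynomial p with p(t) = #{x ∈ {0,...,t}^n : Σ x_i ≤ kt} for all integers t ≥ 0, has constant term 1 and all other coefficients strictly positive, for 1 ≤ k ≤ n. -/

import Mathlib

noncomputable section

open Finset

/-- The weight of a linearly ordered block (given as a list): the number of its
elements smaller than its first element. -/
def blockWeight (b : List ℕ) : ℕ := (b.filter (fun x => x < b.headI)).length

/-- `P` is a partition of `{1,…,n}` into linearly ordered blocks (nonempty lists
of distinct elements, pairwise disjoint, whose union is `{1,…,n}`). -/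
def IsOrderedPartition (n : ℕ) (P : Finset (List ℕ)) : Prop :=
  (∀ b ∈ P, b ≠ [] ∧ b.Nodup) ∧
  (∀ b₁ ∈ P, ∀ b₂ ∈ P, b₁ ≠ b₂ → ∀ x, x ∈ b₁ → x ∉ b₂) ∧
  (∀ x : ℕ, (∃ b ∈ P, x ∈ b) ↔ x ∈ Finset.Icc 1 n)

/-- The weight of an ordered partition: the sum of the weights of its blocks. -/
def partitionWeight (P : Finset (List ℕ)) : ℕ := ∑ b ∈ P, blockWeight b

/-- The weighted Lah number `W(ℓ,n,m)`: the number of partitions of `{1,…,n}`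
into exactly `m` linearly ordered blocks with total weight `ℓ`.
(It vanishes for `ℓ < 0`.) -/
def weightedLah (ℓ : ℤ) (n m : ℕ) : ℕ :=
  Set.ncard {P : Finset (List ℕ) |
    IsOrderedPartition n P ∧ P.card = m ∧ (partitionWeight P : ℤ) = ℓ}

/-- The number of cycles of a permutation of `Fin n` (fixed points count as cycles). -/
def numCycles {n : ℕ} (σ : Equiv.Perm (Fin n)) : ℕ :=
  Multiset.card σ.cycleType + (n - σ.cycleType.sum)

/-- The unsigned Stirling number of the first kind: the number of permutations of
`n` elements with exactly `m` cycles. -/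
def stirlingFirst (n m : ℕ) : ℕ :=
  Nat.card {σ : Equiv.Perm (Fin n) // numCycles σ = m}

/-- The number of descents of a permutation of `Fin m`. -/
def descentCount (m : ℕ) (σ : Equiv.Perm (Fin m)) : ℕ :=
  ((Finset.range (m - 1)).filter (fun i =>
    ((List.ofFn (fun j => (σ j : ℕ))).getD (i + 1) 0) <
      ((List.ofFn (fun j => (σ j : ℕ))).getD i 0))).card

/-- The Eulerian number `A(m,j)`: permutations of `{1,…,m}` with exactly `j` descents. -/
def eulerian (m j : ℕ) : ℕ :=
  Nat.card {σ : Equiv.Perm (Fin m) // descentCount m σ = j}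

/-- The coefficient `e_{k,n,m}` of the Ehrhart polynomial of the hypersimplex. -/
def eCoef (k n m : ℕ) : ℚ :=
  (1 / (n - 1).factorial : ℚ) *
    ∑ ℓ ∈ Finset.range k, (weightedLah ℓ n (m + 1) : ℚ) * (eulerian m (k - ℓ - 1) : ℚ)

/-- Number of lattice points of the `t`-th dilate of the hypersimplex `Δ_{k,n}`,
i.e. points of `{0,…,t}^n` with coordinate sum `k·t`. -/
def hyperCount (k n t : ℕ) : ℕ :=
  Nat.card {x : Fin n → ℤ // (∀ i, 0 ≤ x i ∧ x i ≤ (t : ℤ)) ∧ ∑ i, x i = (k : ℤ) * t}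

/-- Number of lattice points of the `t`-th dilate of the half-open hypersimplex
`Δ'_{k,n} ⊆ ℝ^{n-1}` (for `k > 1`). -/
def halfOpenCount (k n t : ℕ) : ℕ :=
  Nat.card {x : Fin (n - 1) → ℤ // (∀ i, 0 ≤ x i ∧ x i ≤ (t : ℤ)) ∧
    ((k : ℤ) - 1) * t < ∑ i, x i ∧ ∑ i, x i ≤ (k : ℤ) * t}

/-- Number of lattice points of the `t`-th dilate of the independence polytope of
`U_{k,n}`, i.e. points of `{0,…,t}^n` with coordinate sum at most `k·t`. -/
def indepCount (k n t : ℕ) : ℕ :=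
  Nat.card {x : Fin n → ℤ // (∀ i, 0 ≤ x i ∧ x i ≤ (t : ℤ)) ∧ ∑ i, x i ≤ (k : ℤ) * t}

/-- Number of lattice points of a region `S ⊆ ℝ^d`. -/
def latticeCount {d : ℕ} (S : Set (Fin d → ℝ)) : ℕ :=
  Nat.card {x : Fin d → ℤ // (fun i => (x i : ℝ)) ∈ S}

/-!
Write `D(x, j) = n! (x + n - j choose n)`. Inclusion-exclusion over the coordinates exceeding `t`
expresses `n!` times the number of lattice points as `∑ (-1)ʲ (n choose j) D(i t, j)`, the sum being
over `i + j = k`; its terms are coefficients of the series `F(x) = ∑ⱼ (-1)ʲ (n choose j) D(x, j) Xʲ`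
at `x = i t`. This series has an expansion `F(x) = ∑ₘ xᵐ (1 - X)ᵐ Lₘ(X)`, where `Lₘ` counts
partitions into `m + 1` linearly ordered blocks by weight, so that `n!` times the coefficient of
`tᵐ` is the coefficient of `Xᵏ` in `Lₘ(X) (1 - X)ᵐ ∑ᵢ iᵐ Xⁱ`. Since `(1 - X)ᵐ⁺¹ ∑ᵢ iᵐ Xⁱ` is an
Eulerian polynomial, both factors have nonnegative coefficients; those of `X⁰` in the first and of
`Xᵏ` in the second are positive.
-/

section Numbers

/-- The number of partitions of `{0, …, n}` into `m + 1` linearly ordered blocks, the block of `0`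
starting with `0`, whose weights (see `blockWeight`) add up to `a`. It is encoded by its recurrence
in `n`; the truncation in `n - a` is harmless because of `pointedLah_eq_zero_of_lt_weight`. -/
def pointedLah : ℕ → ℕ → ℕ → ℕ
  | 0, 0, 0 => 1
  | 0, _, _ => 0
  | n + 1, 0, 0 => (n + 1) * pointedLah n 0 0
  | n + 1, 0, a + 1 => (n - a) * pointedLah n 0 (a + 1) + a * pointedLah n 0 a
  | n + 1, m + 1, 0 => (n + 1) * pointedLah n (m + 1) 0 + pointedLah n m 0
  | n + 1, m + 1, a + 1 =>
      (n - a) * pointedLah n (m + 1) (a + 1) + (m + 1 + a) * pointedLah n (m + 1) a +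
        pointedLah n m (a + 1)

lemma pointedLah_eq_zero_of_lt_blocks {n m : ℕ} (h : n < m) (a : ℕ) : pointedLah n m a = 0 := by
  induction n generalizing m a with
  | zero => obtain ⟨m, rfl⟩ := Nat.exists_eq_add_of_lt h; simp [pointedLah]
  | succ n ih =>
    obtain ⟨m, rfl⟩ := Nat.exists_eq_add_one_of_ne_zero (Nat.ne_zero_of_lt h)
    cases a <;> simp [pointedLah, ih (show n < m by lia), ih (show n < m + 1 by lia)]

lemma pointedLah_eq_zero_of_lt_weight {n a : ℕ} (h : n < a) (m : ℕ) : pointedLah n m a = 0 := by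
  induction n generalizing m a with
  | zero => obtain ⟨a, rfl⟩ := Nat.exists_eq_add_of_lt h; simp [pointedLah]
  | succ n ih =>
    obtain ⟨a, rfl⟩ := Nat.exists_eq_add_one_of_ne_zero (Nat.ne_zero_of_lt h)
    cases m <;> simp [pointedLah, ih (show n < a by lia), ih (show n < a + 1 by lia)]

lemma pointedLah_zero_weight_pos {n m : ℕ} (h : m ≤ n) : 0 < pointedLah n m 0 := by
  induction n generalizing m with
  | zero => simp [Nat.le_zero.mp h, pointedLah]
  | succ n ih =>
    cases m with
    | zero => simpa [pointedLah] using ih n.zero_le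
    | succ m => simpa [pointedLah] using Or.inr (ih (Nat.succ_le_succ_iff.mp h))

/-- The number of permutations of `{1, …, m}` with `b` ascending runs, which is the Eulerian number
with `b - 1` descents when `1 ≤ m`. It is encoded by its recurrence in `m`; the truncated difference
`m + 1 - b` is harmless because of `eulerianRuns_eq_zero_of_lt`. -/
def eulerianRuns : ℕ → ℕ → ℕ
  | 0, 0 => 1
  | 0, _ + 1 => 0
  | _ + 1, 0 => 0
  | m + 1, b + 1 => (b + 1) * eulerianRuns m (b + 1) + (m + 1 - b) * eulerianRuns m b

lemma eulerianRuns_eq_zero_of_lt {m b : ℕ} (h : m < b) : eulerianRuns m b = 0 := by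
  induction m generalizing b with
  | zero => obtain ⟨b, rfl⟩ := Nat.exists_eq_add_of_lt h; simp [eulerianRuns]
  | succ m ih =>
    obtain ⟨b, rfl⟩ := Nat.exists_eq_add_one_of_ne_zero (Nat.ne_zero_of_lt h)
    simp [eulerianRuns, ih (show m < b by lia), ih (show m < b + 1 by lia)]

lemma eulerianRuns_succ_one (m : ℕ) : eulerianRuns (m + 1) 1 = 1 := by
  induction m with
  | zero => rfl
  | succ m ih => rw [eulerianRuns, ih]; simp [eulerianRuns]

lemma sum_eulerianRuns_pos (m : ℕ) {b : ℕ} (hb : 1 ≤ b) :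
    0 < ∑ i ∈ range (b + 1), eulerianRuns m i := by
  cases m with
  | zero => exact sum_pos' (fun _ _ => Nat.zero_le _) ⟨0, by simp, by simp [eulerianRuns]⟩
  | succ m =>
    exact sum_pos' (fun _ _ => Nat.zero_le _)
      ⟨1, mem_range_succ_iff.mpr hb, by simp [eulerianRuns_succ_one]⟩

end Numbers

section GeneratingFunctions

open PowerSeries

variable {R : Type*} [CommRing R]

lemma coeff_X_mul_derivative (f : R⟦X⟧) (j : ℕ) :
    coeff j (X * d⁄dX R f) = j * coeff j f := by
  cases j with
  | zero => simp
  | succ j => rw [coeff_succ_X_mul, coeff_derivative]; push_cast; ring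

lemma coeff_mul_mk_one (f : R⟦X⟧) (b : ℕ) :
    coeff b (f * PowerSeries.mk 1) = ∑ i ∈ range (b + 1), coeff i f := by
  simp [coeff_mul, Nat.sum_antidiagonal_eq_sum_range_succ_mk]

/-- The operator `f ↦ (c + m X) f - (1 - X) X f'`, the common part of the recurrences of
`pointedLahSeries`, `signedChooseSeries` and `eulerianSeries`. -/
def weightStep (c m : R) : R⟦X⟧ →ₗ[R] R⟦X⟧ :=
  LinearMap.mulLeft R (C c + C m * X) -
    LinearMap.mulLeft R (1 - X) ∘ₗ LinearMap.mulLeft R X ∘ₗ (d⁄dX R : R⟦X⟧ →ₗ[R] R⟦X⟧)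

lemma weightStep_apply (c m : R) (f : R⟦X⟧) :
    weightStep c m f = (C c + C m * X) * f - (1 - X) * (X * d⁄dX R f) :=
  rfl

lemma coeff_zero_weightStep (c m : R) (f : R⟦X⟧) :
    coeff 0 (weightStep c m f) = c * coeff 0 f := by
  simp [weightStep_apply]

lemma coeff_succ_weightStep (c m : R) (f : R⟦X⟧) (a : ℕ) :
    coeff (a + 1) (weightStep c m f) = (c - (a + 1)) * coeff (a + 1) f + (m + a) * coeff a f := by
  have expand : weightStep c m f =
      C c * f + X * (C m * f) - X * d⁄dX R f + X * (X * d⁄dX R f) := by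
    rw [weightStep_apply]; ring
  rw [expand, map_add, map_sub, map_add, coeff_succ_X_mul _ (C m * f),
    coeff_succ_X_mul _ (X * d⁄dX R f), coeff_C_mul, coeff_C_mul, coeff_X_mul_derivative,
    coeff_X_mul_derivative]
  push_cast
  ring

lemma weightStep_one_sub_X_pow_mul (c d : R) (m : ℕ) (f : R⟦X⟧) :
    weightStep c d ((1 - X) ^ m * f) = (1 - X) ^ m * weightStep c (d + m) f := by
  cases m with
  | zero => simp
  | succ m =>
    simp only [weightStep_apply, Derivation.leibniz, derivative_pow, map_sub, derivative_one,
      derivative_X, map_add, map_natCast, smul_eq_mul, Nat.add_sub_cancel]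
    ring

/-- The generating function `∑ₐ pointedLah n m a Xᵃ` over `R`. -/
def pointedLahSeries (R : Type*) [CommRing R] (n m : ℕ) : R⟦X⟧ :=
  mk fun a => (pointedLah n m a : R)

lemma cast_sub_mul_pointedLah (n m a : ℕ) :
    ((n - a : ℕ) : R) * pointedLah n m (a + 1) = (n - a) * pointedLah n m (a + 1) := by
  obtain h | h := le_or_gt a n
  · rw [Nat.cast_sub h]
  · simp [pointedLah_eq_zero_of_lt_weight (show n < a + 1 by lia)]

lemma pointedLahSeries_zero_zero : pointedLahSeries R 0 0 = 1 := by
  ext (_ | a) <;> simp [pointedLahSeries, pointedLah, coeff_one]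

lemma pointedLahSeries_eq_zero_of_lt {n m : ℕ} (h : n < m) : pointedLahSeries R n m = 0 := by
  ext a; simp [pointedLahSeries, pointedLah_eq_zero_of_lt_blocks h]

lemma pointedLahSeries_succ_zero (n : ℕ) :
    pointedLahSeries R (n + 1) 0 = weightStep (n + 1 : R) 0 (pointedLahSeries R n 0) := by
  ext (_ | a)
  · rw [coeff_zero_weightStep]
    simp [pointedLahSeries, pointedLah]
  · rw [coeff_succ_weightStep]
    simp only [pointedLahSeries, coeff_mk, pointedLah]
    push_cast
    linear_combination cast_sub_mul_pointedLah (R := R) n 0 a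

lemma pointedLahSeries_succ_succ (n m : ℕ) :
    pointedLahSeries R (n + 1) (m + 1) =
      weightStep (n + 1 : R) (m + 1 : ℕ) (pointedLahSeries R n (m + 1)) +
        pointedLahSeries R n m := by
  ext (_ | a)
  · rw [map_add, coeff_zero_weightStep]
    simp [pointedLahSeries, pointedLah]
  · rw [map_add, coeff_succ_weightStep]
    simp only [pointedLahSeries, coeff_mk, pointedLah]
    push_cast
    linear_combination cast_sub_mul_pointedLah (R := R) n (m + 1) a

lemma eval_descPochhammer_succ_left (n : ℕ) (u : R) :
    (descPochhammer R (n + 1)).eval u = u * (descPochhammer R n).eval (u - 1) := by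
  simp [descPochhammer_succ_left]

/-- The generating function in `j` of the terms `n! (-1)ʲ (n choose j) (x + n - j choose n)`, where
the last binomial coefficient is read as a polynomial in `x`. -/
def signedChooseSeries (n : ℕ) (x : R) : R⟦X⟧ :=
  mk fun j => (-1) ^ j * n.choose j * (descPochhammer R n).eval (x + n - j)

lemma signedChooseSeries_zero (x : R) : signedChooseSeries 0 x = 1 := by
  ext (_ | j) <;> simp [signedChooseSeries, coeff_one]

-- Pascal's rule for `n + 1 choose j`, with a factor split off either end of the falling product.
lemma signedChooseSeries_succ (n : ℕ) (x : R) :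
    signedChooseSeries (n + 1) x =
      x • ((1 - X) * signedChooseSeries n x) +
        weightStep (n + 1 : R) 0 (signedChooseSeries n x) := by
  ext (_ | j)
  · have left := eval_descPochhammer_succ_left n (x + n + 1)
    rw [add_sub_cancel_right] at left
    have coeff_zero (f : R⟦X⟧) : coeff 0 ((1 - X) * f) = coeff 0 f := by simp
    rw [map_add, map_smul, coeff_zero_weightStep, coeff_zero]
    simp only [signedChooseSeries, coeff_mk, Nat.cast_succ, ← add_assoc, Nat.cast_zero, sub_zero,
      left, Nat.choose_zero_right, smul_eq_mul]
    ring
  · obtain ⟨u, rfl⟩ : ∃ u, x = u - n + j := ⟨x + n - j, by ring⟩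
    have arg_succ : u - n + j + (n + 1 : ℕ) - (j + 1 : ℕ) = u := by push_cast; ring
    have arg_left : u - n + j + n - (j + 1 : ℕ) = u - 1 := by push_cast; ring
    have arg_right : u - n + j + n - (j : ℕ) = u := by ring
    have left := eval_descPochhammer_succ_left n u
    have right := descPochhammer_succ_eval n u
    rw [map_add, map_smul, coeff_succ_weightStep, sub_mul, one_mul, map_sub, coeff_succ_X_mul]
    simp only [signedChooseSeries, coeff_mk, arg_succ, arg_left, arg_right, Nat.choose_succ_succ,
      smul_eq_mul]
    push_cast
    linear_combination (-1) ^ (j + 1) * n.choose (j + 1) * left +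
      (-1) ^ (j + 1) * n.choose j * right

-- Both sides obey the recurrence of `signedChooseSeries_succ`: multiplying by `x • (1 - X)` raises
-- `m` by one, and `weightStep` commutes with `(1 - X) ^ m` up to changing its parameter.
lemma signedChooseSeries_eq_sum_pointedLahSeries (n : ℕ) (x : R) :
    signedChooseSeries n x =
      ∑ m ∈ range (n + 1), x ^ m • ((1 - X) ^ m * pointedLahSeries R n m) := by
  induction n with
  | zero => simp [signedChooseSeries_zero, pointedLahSeries_zero_zero]
  | succ n ih =>
    set L := pointedLahSeries R n
    let K (m : ℕ) : R⟦X⟧ := weightStep (n + 1 : R) m (L m)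
    have K_zero : K 0 = pointedLahSeries R (n + 1) 0 := by
      simp [K, L, pointedLahSeries_succ_zero]
    have K_succ (m : ℕ) : L m + K (m + 1) = pointedLahSeries R (n + 1) (m + 1) := by
      simp only [K, L, pointedLahSeries_succ_succ, add_comm]
    have K_last : K (n + 1) = 0 := by
      simp [K, L, pointedLahSeries_eq_zero_of_lt n.lt_succ_self]
    calc signedChooseSeries (n + 1) x
      _ = ∑ m ∈ range (n + 1), x ^ (m + 1) • ((1 - X) ^ (m + 1) * L m) +
            ∑ m ∈ range (n + 1), x ^ m • ((1 - X) ^ m * K m) := by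
          rw [signedChooseSeries_succ, ih, mul_sum, smul_sum, map_sum]
          simp only [map_smul, weightStep_one_sub_X_pow_mul, zero_add, mul_smul_comm, smul_smul,
            ← mul_assoc, ← pow_succ', K]
      _ = ∑ m ∈ range (n + 1), x ^ (m + 1) • ((1 - X) ^ (m + 1) * L m) +
            ∑ m ∈ range (n + 2), x ^ m • ((1 - X) ^ m * K m) := by
          rw [sum_range_succ _ (n + 1), K_last, mul_zero, smul_zero, add_zero]
      _ = ∑ m ∈ range (n + 2), x ^ m • ((1 - X) ^ m * pointedLahSeries R (n + 1) m) := by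
          rw [sum_range_succ' _ (n + 1), sum_range_succ' _ (n + 1), ← add_assoc,
            ← sum_add_distrib, K_zero]
          simp only [← smul_add, ← mul_add, K_succ]

/-- The power series `∑ᵣ rᵐ Xʳ`, with `0 ^ 0 = 1`. -/
def powSeries (R : Type*) [CommRing R] (m : ℕ) : R⟦X⟧ :=
  mk fun r => (r : R) ^ m

lemma powSeries_succ (m : ℕ) : powSeries R (m + 1) = X * d⁄dX R (powSeries R m) := by
  ext r
  simp [powSeries, coeff_X_mul_derivative, pow_succ']

/-- The generating function `∑_b eulerianRuns m b Xᵇ` over `R`. -/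
def eulerianSeries (R : Type*) [CommRing R] (m : ℕ) : R⟦X⟧ :=
  mk fun b => (eulerianRuns m b : R)

lemma eulerianSeries_zero : eulerianSeries R 0 = 1 := by
  ext (_ | b) <;> simp [eulerianSeries, eulerianRuns, coeff_one]

lemma eulerianSeries_succ (m : ℕ) :
    eulerianSeries R (m + 1) = -weightStep 0 (-(m + 1 : ℕ) : R) (eulerianSeries R m) := by
  ext (_ | b)
  · rw [map_neg, coeff_zero_weightStep]
    simp [eulerianSeries, eulerianRuns]
  · have cast_sub : ((m + 1 - b : ℕ) : R) * eulerianRuns m b = (m + 1 - b) * eulerianRuns m b := by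
      obtain h | h := le_or_gt b (m + 1)
      · rw [Nat.cast_sub h, Nat.cast_succ]
      · simp [eulerianRuns_eq_zero_of_lt (show m < b by lia)]
    rw [map_neg, coeff_succ_weightStep]
    simp only [eulerianSeries, coeff_mk, eulerianRuns]
    push_cast
    linear_combination cast_sub

lemma eulerianSeries_eq_one_sub_X_pow_mul (m : ℕ) :
    eulerianSeries R m = (1 - X) ^ (m + 1) * powSeries R m := by
  induction m with
  | zero =>
    have powSeries_zero : powSeries R 0 = PowerSeries.mk 1 := by ext; simp [powSeries]
    rw [eulerianSeries_zero, powSeries_zero, zero_add, pow_one, mul_comm,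
      mk_one_mul_one_sub_eq_one]
  | succ m ih =>
    rw [eulerianSeries_succ, ih, weightStep_one_sub_X_pow_mul, neg_add_cancel, weightStep_apply,
      ← powSeries_succ, map_zero]
    ring

lemma coeff_one_sub_X_pow_mul_powSeries (m b : ℕ) :
    coeff b ((1 - X) ^ m * powSeries R m) = ∑ i ∈ range (b + 1), (eulerianRuns m i : R) := by
  have h : (1 - X) ^ m * powSeries R m = eulerianSeries R m * PowerSeries.mk 1 := by
    rw [eulerianSeries_eq_one_sub_X_pow_mul]
    linear_combination -((1 - X) ^ m * powSeries R m) * mk_one_mul_one_sub_eq_one R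
  simp [h, coeff_mul_mk_one, eulerianSeries]

lemma coeff_signedChooseSeries_natCast (n j x : ℕ) :
    coeff j (signedChooseSeries n (x : R)) =
      n.factorial * ((-1) ^ j * n.choose j * (x + n - j).choose n) := by
  obtain h | h := lt_or_ge n j
  · simp [signedChooseSeries, Nat.choose_eq_zero_of_lt h]
  have arg : (x + n - j : R) = (x + n - j : ℕ) := by push_cast [show j ≤ x + n by lia]; rfl
  rw [signedChooseSeries, coeff_mk, arg, descPochhammer_eval_eq_descFactorial,
    Nat.descFactorial_eq_factorial_mul_choose]
  push_cast
  ring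

end GeneratingFunctions

section LatticePoints

open PowerSeries

lemma indepCount_eq_card (k n t : ℕ) : indepCount k n t =
    #{f ∈ Fintype.piFinset fun _ : Fin n => range (t + 1) | ∑ i, f i ≤ k * t} := by
  rw [indepCount, ← Nat.card_eq_finsetCard]
  refine Nat.card_congr ⟨fun x => ⟨fun i => (x.1 i).toNat, ?_⟩, fun f => ⟨fun i => (f.1 i : ℤ), ?_⟩,
    fun x => ?_, fun f => ?_⟩
  · obtain ⟨x, hx, hsum⟩ := x
    have cast_toNat (i : Fin n) : ((x i).toNat : ℤ) = x i := Int.toNat_of_nonneg (hx i).1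
    simp only [mem_filter, Fintype.mem_piFinset, mem_range]
    refine ⟨fun i => ?_, by zify; simpa only [cast_toNat] using hsum⟩
    have := hx i
    lia
  · obtain ⟨f, hf⟩ := f
    simp only [mem_filter, Fintype.mem_piFinset, mem_range] at hf
    exact ⟨fun i => ⟨by lia, by have := hf.1 i; lia⟩, by dsimp only; exact_mod_cast hf.2⟩
  · ext i
    exact Int.toNat_of_nonneg (x.2.1 i).1
  · ext i
    exact Int.toNat_natCast _

lemma card_filter_sum_le_eq_coeff (R ι : Type*) [CommRing R] [Fintype ι] [DecidableEq ι]
    (t N : ℕ) :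
    (#{f ∈ Fintype.piFinset fun _ : ι => range (t + 1) | ∑ i, f i ≤ N} : R) =
      coeff N ((1 - X ^ (t + 1)) ^ Fintype.card ι * PowerSeries.mk 1 ^ (Fintype.card ι + 1)) := by
  have geom : (1 - X ^ (t + 1)) * PowerSeries.mk 1 = ∑ i ∈ range (t + 1), (X : R⟦X⟧) ^ i := by
    linear_combination (∑ i ∈ range (t + 1), (X : R⟦X⟧) ^ i) * mk_one_mul_one_sub_eq_one R -
      PowerSeries.mk 1 * geom_sum_mul_neg (X : R⟦X⟧) (t + 1)
  have expand : (1 - X ^ (t + 1)) ^ Fintype.card ι * PowerSeries.mk 1 ^ (Fintype.card ι + 1) =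
      (∏ _i : ι, ∑ i ∈ range (t + 1), (X : R⟦X⟧) ^ i) * PowerSeries.mk 1 := by
    rw [prod_const, ← geom, card_univ, mul_pow]
    ring
  rw [expand, prod_univ_sum, sum_mul, map_sum, card_filter, Nat.cast_sum]
  refine sum_congr rfl fun f _ => ?_
  rw [prod_pow_eq_pow_sum, coeff_X_pow_mul']
  simp

lemma card_filter_sum_le (R ι : Type*) [CommRing R] [Fintype ι] [DecidableEq ι] (t N : ℕ) :
    (#{f ∈ Fintype.piFinset fun _ : ι => range (t + 1) | ∑ i, f i ≤ N} : R) =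
      ∑ j ∈ range (Fintype.card ι + 1), if j * (t + 1) ≤ N then
        (-1 : R) ^ j * (Fintype.card ι).choose j *
          (Fintype.card ι + (N - j * (t + 1))).choose (Fintype.card ι) else 0 := by
  have binomial : (1 - X ^ (t + 1) : R⟦X⟧) ^ Fintype.card ι = ∑ j ∈ range (Fintype.card ι + 1),
      C ((-1) ^ j * (Fintype.card ι).choose j : R) * X ^ (j * (t + 1)) := by
    rw [sub_eq_neg_add, add_pow]
    refine sum_congr rfl fun j _ => ?_
    simp only [map_mul, map_pow, map_neg, map_one, map_natCast, one_pow]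
    rw [neg_pow, ← pow_mul']
    ring
  rw [card_filter_sum_le_eq_coeff, mk_one_pow_eq_mk_choose_add, binomial, sum_mul, map_sum]
  refine sum_congr rfl fun j _ => ?_
  rw [mul_assoc, coeff_C_mul, coeff_X_pow_mul', coeff_mk, mul_ite, mul_zero]

lemma indepCount_eq_sum_antidiagonal (R : Type*) [CommRing R] (k n t : ℕ) :
    (indepCount k n t : R) =
      ∑ p ∈ antidiagonal k,
        (-1 : R) ^ p.1 * n.choose p.1 * (p.2 * t + n - p.1 : ℕ).choose n := by
  rw [indepCount_eq_card, card_filter_sum_le, Fintype.card_fin,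
    Nat.sum_antidiagonal_eq_sum_range_succ_mk]
  refine sum_congr_of_eq_on_inter (fun j _ hjk => if_neg ?_) (fun j _ hjn => ?_) fun j hjn hjk => ?_
  · have : k < j := by simpa using hjk
    nlinarith
  · rw [Nat.choose_eq_zero_of_lt (by simpa using hjn)]
    simp
  · obtain ⟨i, rfl⟩ := Nat.exists_eq_add_of_le (mem_range_succ_iff.mp hjk)
    have hjn : j ≤ n := mem_range_succ_iff.mp hjn
    have le_iff : j * (t + 1) ≤ (j + i) * t ↔ j ≤ i * t := by
      rw [mul_add, add_mul, mul_one, add_le_add_iff_left]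
    have sub_eq : (j + i) * t - j * (t + 1) = i * t - j := by
      rw [mul_add, add_mul, mul_one, Nat.add_sub_add_left]
    simp only [le_iff, sub_eq, Nat.add_sub_cancel_left]
    split_ifs with h
    · rw [← Nat.add_sub_assoc h, add_comm n]
    · rw [Nat.choose_eq_zero_of_lt (show i * t + n - j < n by lia)]
      simp

end LatticePoints

section EhrhartPolynomial

open PowerSeries

/-- The coefficient of `tᵐ` in the Ehrhart polynomial of the independence polytope of `U_{k,n}`. -/
def indepEhrhartCoeff (k n m : ℕ) : ℚ :=
  (∑ p ∈ antidiagonal k, pointedLah n m p.1 * ∑ i ∈ range (p.2 + 1), eulerianRuns m i : ℕ) /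
    n.factorial

lemma indepEhrhartCoeff_pos {k n m : ℕ} (hk : 1 ≤ k) (hmn : m ≤ n) :
    0 < indepEhrhartCoeff k n m := by
  refine div_pos (Nat.cast_pos.mpr ?_) (by positivity)
  exact sum_pos' (fun _ _ => Nat.zero_le _)
    ⟨(0, k), by simp, Nat.mul_pos (pointedLah_zero_weight_pos hmn) (sum_eulerianRuns_pos m hk)⟩

lemma factorial_mul_indepEhrhartCoeff (k n m : ℕ) :
    n.factorial * indepEhrhartCoeff k n m =
      ∑ p ∈ antidiagonal k, coeff p.1 ((1 - X) ^ m * pointedLahSeries ℚ n m) * (p.2 : ℚ) ^ m := by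
  have h : n.factorial * indepEhrhartCoeff k n m =
      coeff k (pointedLahSeries ℚ n m * ((1 - X) ^ m * powSeries ℚ m)) := by
    rw [indepEhrhartCoeff, mul_div_cancel₀ _ (by positivity), coeff_mul]
    simp only [coeff_one_sub_X_pow_mul_powSeries, pointedLahSeries, coeff_mk]
    push_cast
    rfl
  rw [h, mul_left_comm, ← mul_assoc, coeff_mul]
  simp only [powSeries, coeff_mk]

/-- The Ehrhart polynomial of the independence polytope of `U_{k,n}`. -/
def indepEhrhart (k n : ℕ) : Polynomial ℚ :=
  ∑ m ∈ range (n + 1), Polynomial.monomial m (indepEhrhartCoeff k n m)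

lemma coeff_indepEhrhart {k n m : ℕ} (h : m ≤ n) :
    (indepEhrhart k n).coeff m = indepEhrhartCoeff k n m := by
  simp [indepEhrhart, Polynomial.coeff_monomial, Nat.lt_succ_of_le h]

lemma natDegree_indepEhrhart {k : ℕ} (hk : 1 ≤ k) (n : ℕ) : (indepEhrhart k n).natDegree = n := by
  refine Polynomial.natDegree_eq_of_le_of_coeff_ne_zero ?_ ?_
  · exact Polynomial.natDegree_sum_le_of_forall_le _ _ fun m hm =>
      (Polynomial.natDegree_monomial_le _).trans (mem_range_succ_iff.mp hm)
  · rw [coeff_indepEhrhart le_rfl]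
    exact (indepEhrhartCoeff_pos hk le_rfl).ne'

lemma indepCount_eq_eval_indepEhrhart (k n t : ℕ) :
    (indepCount k n t : ℚ) = (indepEhrhart k n).eval (t : ℚ) := by
  refine mul_left_cancel₀ (Nat.cast_ne_zero.mpr n.factorial_ne_zero) ?_
  calc (n.factorial : ℚ) * indepCount k n t
    _ = ∑ p ∈ antidiagonal k, coeff p.1 (signedChooseSeries n ((p.2 * t : ℕ) : ℚ)) := by
        rw [indepCount_eq_sum_antidiagonal, mul_sum]
        simp only [coeff_signedChooseSeries_natCast]
    _ = ∑ p ∈ antidiagonal k, ∑ m ∈ range (n + 1),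
          (p.2 * t : ℚ) ^ m * coeff p.1 ((1 - X) ^ m * pointedLahSeries ℚ n m) := by
        simp only [signedChooseSeries_eq_sum_pointedLahSeries, map_sum, map_smul, smul_eq_mul,
          Nat.cast_mul]
    _ = ∑ m ∈ range (n + 1), n.factorial * indepEhrhartCoeff k n m * (t : ℚ) ^ m := by
        rw [sum_comm]
        simp only [factorial_mul_indepEhrhartCoeff, sum_mul, mul_pow]
        exact sum_congr rfl fun m _ => sum_congr rfl fun p _ => by ring
    _ = n.factorial * (indepEhrhart k n).eval (t : ℚ) := by
        simp only [indepEhrhart, Polynomial.eval_finsetSum, Polynomial.eval_monomial, mul_sum,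
          mul_assoc]

lemma indepCount_zero (k n : ℕ) : indepCount k n 0 = 1 := by
  have h : {f ∈ Fintype.piFinset fun _ : Fin n => range (0 + 1) | ∑ i, f i ≤ k * 0} = {0} := by
    ext f
    simp [funext_iff]
  rw [indepCount_eq_card, h, card_singleton]

end EhrhartPolynomial

theorem indep_uniform_ehrhart_positive_general (k n : ℕ) (hk : 1 ≤ k) :
    ∃ p : Polynomial ℚ, p.natDegree = n ∧
      (∀ t : ℕ, (indepCount k n t : ℚ) = p.eval (t : ℚ)) ∧
      p.coeff 0 = 1 ∧ ∀ m, 1 ≤ m → m ≤ n → 0 < p.coeff m := by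
  refine ⟨indepEhrhart k n, natDegree_indepEhrhart hk n, indepCount_eq_eval_indepEhrhart k n,
    ?_, fun m _ hmn => ?_⟩
  · rw [Polynomial.coeff_zero_eq_eval_zero, ← Nat.cast_zero, ← indepCount_eq_eval_indepEhrhart,
      indepCount_zero, Nat.cast_one]
  · rw [coeff_indepEhrhart hmn]
    exact indepEhrhartCoeff_pos hk hmn

theorem indep_uniform_ehrhart_positive (k n : ℕ) (hk : 1 ≤ k) (hkn : k ≤ n) :
    ∃ p : Polynomial ℚ, p.natDegree = n ∧
      (∀ t : ℕ, (indepCount k n t : ℚ) = p.eval (t : ℚ)) ∧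
      p.coeff 0 = 1 ∧ ∀ m, 1 ≤ m → m ≤ n → 0 < p.coeff m :=
  indep_uniform_ehrhart_positive_general k n hk
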